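/- arXiv:2108.03295 — 2 statements merged into one kernel-verified Lean document; each statement's English description precedes it below -/
import Mathlib

section
/- Let P be a partially ordered set with a greatest element ⊤ and let a ∈ P. Then a is a non-generator if and only if both: (i) a ≤ p for every p ∈ P that is maximal below ⊤, and (ii) for every chain C ⊆ P that is unbounded below ⊤ and such that no element of C lies below an element maximal below ⊤, and for every c ∈ C, there exists r ∈ P with r < ⊤, a ≤ r and c ≤ r. -/
def NonGenerator {P : Type*} [PartialOrder P] [OrderTop P] (a : P) : Prop :=
  ∀ e : P, (¬ ∃ p : P, p < ⊤ ∧ a ≤ p ∧ e ≤ p) → e = ⊤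

def MaximalBelowTop {P : Type*} [PartialOrder P] [OrderTop P] (p : P) : Prop :=
  p < ⊤ ∧ ¬ ∃ q : P, p < q ∧ q < ⊤

def UnboundedBelowTopChain {P : Type*} [PartialOrder P] [OrderTop P] (C : Set P) : Prop :=
  C.Nonempty ∧ IsChain (· ≤ ·) C ∧ (∀ c ∈ C, c < ⊤) ∧
    ¬ ∃ p : P, p < ⊤ ∧ ∀ c ∈ C, c ≤ p

/-!
Being a non-generator means that every `e < ⊤` has a common upper bound with `a` below `⊤`. If `e`
lies under an element maximal below `⊤`, condition (i) makes that element such a bound. Otherwise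
Zorn's lemma must fail above `e`, and it can only fail by an unbounded chain of elements `≥ e`;
condition (ii), applied to any member of this chain, then bounds `a` and `e`.
-/

theorem exists_le_maximal_or_exists_unbounded_chain {α : Type*} [Preorder α] {s : Set α} {x : α}
    (hx : x ∈ s) :
    (∃ m, x ≤ m ∧ Maximal (· ∈ s) m) ∨
      ∃ C ⊆ s ∩ Set.Ici x, C.Nonempty ∧ IsChain (· ≤ ·) C ∧ ¬ ∃ u ∈ s, u ∈ upperBounds C := by
  refine or_iff_not_imp_right.mpr fun no_unbounded_chain ↦ ?_
  have chain_bounded : ∀ C ⊆ s ∩ Set.Ici x, IsChain (· ≤ ·) C → ∀ y ∈ C,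
      ∃ u ∈ s ∩ Set.Ici x, ∀ z ∈ C, z ≤ u := by
    intro C hCs hC y hy
    obtain ⟨u, hus, hu⟩ : ∃ u ∈ s, u ∈ upperBounds C :=
      not_not.mp fun hunbdd ↦ no_unbounded_chain ⟨C, hCs, ⟨y, hy⟩, hC, hunbdd⟩
    exact ⟨u, ⟨hus, (hCs hy).2.trans (hu hy)⟩, fun z hz ↦ hu hz⟩
  obtain ⟨m, hxm, hm⟩ := zorn_le_nonempty₀ _ chain_bounded x ⟨hx, le_rfl⟩
  exact ⟨m, hxm, hm.prop.1, fun y hy hmy ↦ hm.le_of_ge ⟨hy, hxm.trans hmy⟩ hmy⟩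

section OrderTop

variable {P : Type*} [PartialOrder P] [OrderTop P] {a e p : P}

theorem nonGenerator_iff_forall_lt_top :
    NonGenerator a ↔ ∀ e < ⊤, ∃ p < ⊤, a ≤ p ∧ e ≤ p := by
  simp only [NonGenerator, lt_top_iff_ne_top, not_imp_comm, ne_eq]

theorem maximalBelowTop_iff_maximal : MaximalBelowTop p ↔ Maximal (· < ⊤) p := by
  simp only [MaximalBelowTop, maximal_iff_forall_gt, not_exists, not_and]

theorem exists_maximalBelowTop_or_unboundedBelowTopChain (he : e < ⊤) :
    (∃ p, MaximalBelowTop p ∧ e ≤ p) ∨ ∃ C, UnboundedBelowTopChain C ∧ ∀ c ∈ C, e ≤ c := by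
  rcases exists_le_maximal_or_exists_unbounded_chain (s := Set.Iio ⊤) he with
    ⟨p, hep, hp⟩ | ⟨C, hCs, hne, hC, hunbdd⟩
  · exact .inl ⟨p, maximalBelowTop_iff_maximal.mpr hp, hep⟩
  · exact .inr ⟨C, ⟨hne, hC, fun c hc ↦ (hCs hc).1, hunbdd⟩, fun c hc ↦ (hCs hc).2⟩

end OrderTop

theorem stmt_7 {P : Type*} [PartialOrder P] [OrderTop P] (a : P) :
    NonGenerator a ↔
      (∀ p : P, MaximalBelowTop p → a ≤ p) ∧
      (∀ C : Set P, UnboundedBelowTopChain C →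
        (∀ c ∈ C, ¬ ∃ p : P, MaximalBelowTop p ∧ c ≤ p) →
        ∀ c ∈ C, ∃ r : P, r < ⊤ ∧ a ≤ r ∧ c ≤ r) := by
  rw [nonGenerator_iff_forall_lt_top]
  constructor
  · intro h
    refine ⟨fun p hp ↦ ?_, fun C ⟨_, _, hC_lt_top, _⟩ _ c hc ↦ h c (hC_lt_top c hc)⟩
    obtain ⟨r, hr, har, hpr⟩ := h p hp.1
    have p_eq_r : p = r := (maximalBelowTop_iff_maximal.mp hp).eq_of_le hr hpr
    exact har.trans_eq p_eq_r.symm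
  · rintro ⟨le_maximal, bounded_with_chain⟩ e he
    by_cases hmax : ∃ p, MaximalBelowTop p ∧ e ≤ p
    · obtain ⟨p, hp, hep⟩ := hmax
      exact ⟨p, hp.1, le_maximal p hp, hep⟩
    · obtain ⟨C, hC, heC⟩ :=
        (exists_maximalBelowTop_or_unboundedBelowTopChain he).resolve_left hmax
      obtain ⟨c, hc⟩ := hC.1
      have not_le_maximal : ∀ c ∈ C, ¬ ∃ p, MaximalBelowTop p ∧ c ≤ p :=
        fun c hc ⟨p, hp, hcp⟩ ↦ hmax ⟨p, hp, (heC c hc).trans hcp⟩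
      obtain ⟨r, hr, har, hcr⟩ := bounded_with_chain C hC not_le_maximal c hc
      exact ⟨r, hr, har, (heC c hc).trans hcr⟩
end

section
/- Let P be a partially ordered set with a greatest element ⊤ and let a ∈ P be weakly ⊤-compact, that is: whenever C ⊆ P is a nonempty chain that is unbounded below ⊤, there exist c ∈ C and r ∈ P with r < ⊤, c ≤ r and a ≤ r. Then a is a non-generator if and only if a ≤ p for every p ∈ P that is maximal below ⊤. -/
/-!
Here `a ∨ e = ⊤` is `Codisjoint a e`, and the maximal elements below `⊤` are the coatoms.
A coatom `m` with `¬ a ≤ m` satisfies `a ∨ m = ⊤`, so a non-generator lies below every coatom.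
Conversely, let `a ∨ e = ⊤`. Then `a ∨ c = ⊤` for every `c ≥ e`, so weak compactness of `a` rules
out unbounded chains above `e`, and `[e, ⊤]` is coatomic by Zorn's lemma. If `e ≠ ⊤`, a coatom above
`e` that is also above `a` would contradict `a ∨ e = ⊤`.
-/

section

variable {P : Type*} [PartialOrder P] [OrderTop P] {a e m p : P}

theorem not_exists_lt_top_ge_iff_codisjoint :
    (¬ ∃ p : P, p < ⊤ ∧ a ≤ p ∧ e ≤ p) ↔ Codisjoint a e := by
  simp only [Codisjoint, lt_top_iff_ne_top, top_le_iff]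
  grind

theorem nonGenerator_iff_forall_codisjoint :
    NonGenerator a ↔ ∀ e : P, Codisjoint a e → e = ⊤ :=
  forall_congr' fun _ ↦ imp_congr_left not_exists_lt_top_ge_iff_codisjoint

theorem maximalBelowTop_iff_isCoatom : MaximalBelowTop p ↔ IsCoatom p := by
  rw [← covBy_top_iff, MaximalBelowTop, CovBy]
  push Not
  rfl

theorem codisjoint_of_isCoatom_of_not_le (hm : IsCoatom m) (ham : ¬ a ≤ m) : Codisjoint a m := by
  intro x hax hmx
  rcases hm.le_iff.mp hmx with rfl | rfl
  · exact le_rfl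
  · exact absurd hax ham

theorem NonGenerator.le_of_isCoatom (ha : NonGenerator a) (hm : IsCoatom m) : a ≤ m := by
  by_contra ham
  exact hm.ne_top
    (nonGenerator_iff_forall_codisjoint.mp ha m (codisjoint_of_isCoatom_of_not_le hm ham))

/-- An element `a` is weakly `⊤`-compact if every chain that is unbounded below `⊤` has a member
sharing with `a` an upper bound other than `⊤`. -/
def WeaklyTopCompact (a : P) : Prop :=
  ∀ C : Set P, UnboundedBelowTopChain C → ∃ c ∈ C, ∃ r : P, r < ⊤ ∧ c ≤ r ∧ a ≤ r

theorem WeaklyTopCompact.exists_ne_top_mem_upperBounds (ha : WeaklyTopCompact a) {C : Set P}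
    (hC : IsChain (· ≤ ·) C) (hne : C.Nonempty) (htop : ⊤ ∉ C) (hcod : ∀ c ∈ C, Codisjoint a c) :
    ∃ p ≠ ⊤, p ∈ upperBounds C := by
  by_contra hunbounded
  have hC_unbounded : UnboundedBelowTopChain C :=
    ⟨hne, hC, fun c hc ↦ (ne_of_mem_of_not_mem hc htop).lt_top,
      fun ⟨p, hp, hCp⟩ ↦ hunbounded ⟨p, hp.ne, hCp⟩⟩
  obtain ⟨c, hc, r, hr, hcr, har⟩ := ha C hC_unbounded
  exact hr.not_ge (hcod c hc har hcr)

theorem WeaklyTopCompact.isCoatomic_Ici (ha : WeaklyTopCompact a) (hae : Codisjoint a e) :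
    IsCoatomic (Set.Ici e) := by
  refine IsCoatomic.of_isChain_bounded fun C hC hne htop ↦ ?_
  have hchain : IsChain (· ≤ ·) (Subtype.val '' C) := (Subtype.mono_coe _).isChain_image hC
  have htop' : ⊤ ∉ Subtype.val '' C := by
    rintro ⟨c, hc, hc_top⟩
    exact htop ((Subtype.ext hc_top : c = ⊤) ▸ hc)
  have hcod : ∀ c ∈ Subtype.val '' C, Codisjoint a c := by
    rintro _ ⟨c, -, rfl⟩
    exact hae.mono_right c.2
  obtain ⟨p, hp, hCp⟩ := ha.exists_ne_top_mem_upperBounds hchain (hne.image _) htop' hcod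
  obtain ⟨c, hc⟩ := hne
  have hep : e ≤ p := c.2.trans (hCp (Set.mem_image_of_mem _ hc))
  exact ⟨⟨p, hep⟩, fun h ↦ hp (congrArg Subtype.val h),
    fun d hd ↦ hCp (Set.mem_image_of_mem _ hd)⟩

theorem WeaklyTopCompact.exists_isCoatom_ge (ha : WeaklyTopCompact a) (hae : Codisjoint a e)
    (he : e ≠ ⊤) : ∃ m, IsCoatom m ∧ e ≤ m := by
  have := ha.isCoatomic_Ici hae
  obtain h | ⟨m, hm, -⟩ := eq_top_or_exists_le_coatom (⟨e, le_rfl⟩ : Set.Ici e)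
  · exact absurd (congrArg Subtype.val h) he
  · exact ⟨m, hm.of_isCoatom_coe_Ici, m.2⟩

theorem WeaklyTopCompact.nonGenerator (ha : WeaklyTopCompact a)
    (hle : ∀ m : P, IsCoatom m → a ≤ m) : NonGenerator a := by
  refine nonGenerator_iff_forall_codisjoint.mpr fun e hae ↦ ?_
  by_contra he
  obtain ⟨m, hm, hem⟩ := ha.exists_isCoatom_ge hae he
  exact hm.ne_top (top_le_iff.mp (hae (hle m hm) hem))

end

theorem stmt_9 {P : Type*} [PartialOrder P] [OrderTop P] (a : P)
    (hweak : ∀ C : Set P, UnboundedBelowTopChain C →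
      ∃ c ∈ C, ∃ r : P, r < ⊤ ∧ c ≤ r ∧ a ≤ r) :
    NonGenerator a ↔ ∀ p : P, MaximalBelowTop p → a ≤ p := by
  simp only [maximalBelowTop_iff_isCoatom]
  have ha : WeaklyTopCompact a := hweak
  exact ⟨fun hng _ hm ↦ hng.le_of_isCoatom hm, ha.nonGenerator⟩
end
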